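/- Let β = r/s be a rational number with r > s > 0 and gcd(r, s) = 1, and let F, G ∈ ℝ[X, Y] be β-quasihomogeneous polynomials of degree d ≥ 1, neither of which is a scalar multiple of X^d. Let f₊, f₋ and g₊, g₋ be the height functions of F and G. Let λ₁, λ₂ be nonzero real numbers with λ₁λ₂ > 0 and φ₁, φ₂ : ℝ → ℝ bi-Lipschitz homeomorphisms such that: if λ₁ > 0 and λ₂ > 0 then |λ₁|^d·(g₊ ∘ φ₁) = f₊ and |λ₂|^d·(g₋ ∘ φ₂) = f₋, while if λ₁ < 0 and λ₂ < 0 then |λ₁|^d·(g₋ ∘ φ₁) = f₊ and |λ₂|^d·(g₊ ∘ φ₂) = f₋; and let L₁, L₂ be real numbers with φᵢ(t)/t → Lᵢ as |t| → +∞ (i = 1, 2). Then |λ₁|^β·L₁ = |λ₂|^β·L₂ holds if and only if both of the following hold: (i) φ₁ and φ₂ are coherent (either both increasing or both decreasing), and (ii) either X divides neither F nor G, or λ₁ = λ₂. -/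

import Mathlib

open Filter Topology

/-- Evaluation of a polynomial in two variables at the point `(x, y)`. -/
noncomputable def eval2 (F : MvPolynomial (Fin 2) ℝ) (x y : ℝ) : ℝ :=
  MvPolynomial.eval ![x, y] F

/-!
A `β`-quasihomogeneous polynomial of degree `d` involves only monomials `X ^ i * Y ^ j` with
`i + β * j = d`, so the one of largest `Y`-degree `e` is unique; it governs the height functions at
infinity, and `X` divides the polynomial exactly when its exponent `i = d - β * e` is nonzero.
Comparing leading terms in `|λ| ^ d * g (φ t) = f t`, where `φ t ~ L * t`, shows that `F` and `G`
have the same `e` and that `|λ₁| ^ d * |L₁| ^ e = |λ₂| ^ d * |L₂| ^ e`, that is,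
`|λ₁| ^ (d - β * e) * (|λ₁| ^ β * |L₁|) ^ e = |λ₂| ^ (d - β * e) * (|λ₂| ^ β * |L₂|) ^ e`.
Hence `|λ₁| ^ β * |L₁| = |λ₂| ^ β * |L₂|` iff `d = β * e` or `|λ₁| = |λ₂|`, while the sign of each
`Lᵢ` records whether `φᵢ` increases or decreases.
-/

open Asymptotics Bornology
open scoped Polynomial

section AsymptoticComparison

variable {𝕜 : Type*} [NormedField 𝕜] {l : Filter 𝕜}

theorem isEquivalent_const_mul_of_tendsto_div (hl : l ≤ cobounded 𝕜) {φ : 𝕜 → 𝕜} {L : 𝕜}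
    (hL : L ≠ 0) (hφ : Tendsto (fun t ↦ φ t / t) l (𝓝 L)) : φ ~[l] fun t ↦ L * t := by
  have hne : ∀ᶠ t in l, t ≠ 0 := hl (eventually_ne_cobounded 0)
  refine (isEquivalent_iff_tendsto_one (hne.mono fun t ht ↦ mul_ne_zero hL ht)).2 ?_
  simpa [hL, div_div, mul_comm L, Pi.div_def] using hφ.div_const L

theorem tendsto_cobounded_of_tendsto_div (hl : l ≤ cobounded 𝕜) {φ : 𝕜 → 𝕜} {L : 𝕜}
    (hL : L ≠ 0) (hφ : Tendsto (fun t ↦ φ t / t) l (𝓝 L)) : Tendsto φ l (cobounded 𝕜) := by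
  have hne : ∀ᶠ t in l, t ≠ 0 := hl (eventually_ne_cobounded 0)
  rw [← tendsto_norm_atTop_iff_cobounded]
  have hprod := hφ.norm.pos_mul_atTop (norm_pos_iff.2 hL)
    (tendsto_norm_cobounded_atTop.mono_left hl)
  refine hprod.congr' (hne.mono fun t ht ↦ ?_)
  rw [← norm_mul, div_mul_cancel₀ _ ht]

theorem limit_div_ne_zero_of_antilipschitzWith [l.NeBot] (hl : l ≤ cobounded 𝕜) {φ : 𝕜 → 𝕜}
    {L : 𝕜} {K : NNReal} (hK : AntilipschitzWith K φ) (hφ : Tendsto (fun t ↦ φ t / t) l (𝓝 L)) :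
    L ≠ 0 := by
  rintro rfl
  have hinv : Tendsto (fun t : 𝕜 ↦ φ 0 * t⁻¹) l (𝓝 (φ 0 * 0)) :=
    (tendsto_inv₀_cobounded.mono_left hl).const_mul _
  have hslope : Tendsto (fun t ↦ K * ‖φ t / t - φ 0 * t⁻¹‖) l (𝓝 0) := by
    simpa using ((hφ.sub hinv).norm).const_mul (K : ℝ)
  refine (one_pos (α := ℝ)).not_ge (ge_of_tendsto hslope ?_)
  filter_upwards [hl (eventually_ne_cobounded 0)] with t ht
  have hexpand : ‖t‖ ≤ K * ‖φ t - φ 0‖ := by simpa [dist_eq_norm] using hK.le_mul_dist t 0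
  rwa [← div_eq_mul_inv, ← sub_div, norm_div, ← mul_div_assoc, one_le_div (norm_pos_iff.2 ht)]

theorem degree_sub_lt_or_eq_of_isEquivalent [l.NeBot] (hl : l ≤ cobounded 𝕜) {P Q : 𝕜[X]}
    (h : P.eval ~[l] Q.eval) : (P - Q).degree < Q.degree ∨ P = Q := by
  refine or_iff_not_imp_left.2 fun hdeg ↦ ?_
  have hbig : Q.eval =O[l] (P - Q).eval :=
    (Polynomial.isBigO_cobounded_of_degree_le (not_lt.1 hdeg)).mono hl
  have hsmall : (P - Q).eval =o[l] (P - Q).eval := by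
    refine IsLittleO.trans_isBigO ?_ hbig
    simpa [IsEquivalent, Pi.sub_def] using h
  by_contra hne
  have hroot := (Polynomial.eventually_cofinite_not_isRoot (sub_ne_zero.2 hne)).filter_mono
    (hl.trans (le_cofinite 𝕜))
  exact isLittleO_irrefl hroot.frequently hsmall

theorem natDegree_eq_and_leadingCoeff_eq_of_isEquivalent [l.NeBot] (hl : l ≤ cobounded 𝕜)
    {P Q : 𝕜[X]} (h : P.eval ~[l] Q.eval) :
    P.natDegree = Q.natDegree ∧ P.leadingCoeff = Q.leadingCoeff := by
  rcases degree_sub_lt_or_eq_of_isEquivalent hl h with hlt | rfl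
  · rw [← add_sub_cancel Q P]
    exact ⟨Polynomial.natDegree_eq_of_degree_eq (Polynomial.degree_add_eq_left_of_degree_lt hlt),
      Polynomial.leadingCoeff_add_of_degree_lt' hlt⟩
  · exact ⟨rfl, rfl⟩

theorem natDegree_eq_and_leadingCoeff_eq_of_mul_eval_comp [l.NeBot] (hl : l ≤ cobounded 𝕜)
    {P Q : 𝕜[X]} (hP : P ≠ 0) {k L : 𝕜} (hk : k ≠ 0) (hL : L ≠ 0) {φ : 𝕜 → 𝕜}
    (hφ : Tendsto (fun t ↦ φ t / t) l (𝓝 L)) (h : ∀ t, k * P.eval (φ t) = Q.eval t) :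
    Q.natDegree = P.natDegree ∧ Q.leadingCoeff = k * P.leadingCoeff * L ^ P.natDegree := by
  set c := k * P.leadingCoeff * L ^ P.natDegree with hc_def
  have hc : c ≠ 0 :=
    mul_ne_zero (mul_ne_zero hk (Polynomial.leadingCoeff_ne_zero.2 hP)) (pow_ne_zero _ hL)
  have hPφ : (fun t ↦ P.eval (φ t)) ~[l] fun t ↦ P.leadingCoeff * φ t ^ P.natDegree :=
    (Polynomial.isEquivalent_cobounded_leading_monomial (P := P)).comp_tendsto
      (tendsto_cobounded_of_tendsto_div hl hL hφ)
  have hφpow := (isEquivalent_const_mul_of_tendsto_div hl hL hφ).pow P.natDegree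
  have hQ : Q.eval ~[l] (Polynomial.C c * Polynomial.X ^ P.natDegree).eval := by
    have hlead := (IsEquivalent.refl (u := fun _ ↦ k)).mul
      (hPφ.trans ((IsEquivalent.refl (u := fun _ ↦ P.leadingCoeff)).mul hφpow))
    convert! hlead using 1
    · exact funext fun t ↦ (h t).symm
    · ext t
      simp [hc_def, mul_pow, mul_assoc]
  simpa [Polynomial.natDegree_C_mul_X_pow _ _ hc] using
    natDegree_eq_and_leadingCoeff_eq_of_isEquivalent hl hQ

end AsymptoticComparison

section LimitSlope

theorem nonneg_of_monotone_of_tendsto_div {φ : ℝ → ℝ} (hmono : Monotone φ) {L : ℝ}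
    (hφ : Tendsto (fun t ↦ φ t / t) atTop (𝓝 L)) : 0 ≤ L := by
  have hslope : Tendsto (fun t ↦ (φ t - φ 0) / t) atTop (𝓝 L) := by
    simpa [sub_div] using hφ.sub (tendsto_const_nhds.div_atTop (a := φ 0) tendsto_id)
  refine ge_of_tendsto hslope ((eventually_ge_atTop 0).mono fun t ht ↦ ?_)
  exact div_nonneg (sub_nonneg.2 (hmono ht)) ht

theorem nonpos_of_antitone_of_tendsto_div {φ : ℝ → ℝ} (hanti : Antitone φ) {L : ℝ}
    (hφ : Tendsto (fun t ↦ φ t / t) atTop (𝓝 L)) : L ≤ 0 :=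
  neg_nonneg.1 <| nonneg_of_monotone_of_tendsto_div hanti.neg <| by
    simpa [neg_div] using hφ.neg

theorem strictMono_iff_limit_div_pos {φ : ℝ → ℝ} (hmono : StrictMono φ ∨ StrictAnti φ) {L : ℝ}
    (hL : L ≠ 0) (hφ : Tendsto (fun t ↦ φ t / t) atTop (𝓝 L)) : StrictMono φ ↔ 0 < L where
  mp h := (nonneg_of_monotone_of_tendsto_div h.monotone hφ).lt_of_ne' hL
  mpr hpos := hmono.resolve_right fun h ↦
    hpos.not_ge (nonpos_of_antitone_of_tendsto_div h.antitone hφ)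

theorem strictAnti_iff_limit_div_neg {φ : ℝ → ℝ} (hmono : StrictMono φ ∨ StrictAnti φ) {L : ℝ}
    (hL : L ≠ 0) (hφ : Tendsto (fun t ↦ φ t / t) atTop (𝓝 L)) : StrictAnti φ ↔ L < 0 where
  mp h := (nonpos_of_antitone_of_tendsto_div h.antitone hφ).lt_of_ne hL
  mpr hneg := hmono.resolve_left fun h ↦
    hneg.not_ge (nonneg_of_monotone_of_tendsto_div h.monotone hφ)

theorem strictMono_or_strictAnti_and_limit_div_ne_zero {φ : ℝ → ℝ} (hinj : Function.Injective φ)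
    (hlip : ∃ K : NNReal, LipschitzWith K φ)
    (hinv : ∃ K : NNReal, LipschitzWith K (Function.invFun φ)) {L : ℝ}
    (hL : Tendsto (fun t ↦ φ t / t) atTop (𝓝 L)) : (StrictMono φ ∨ StrictAnti φ) ∧ L ≠ 0 := by
  obtain ⟨K, hK⟩ := hlip
  obtain ⟨K', hK'⟩ := hinv
  exact ⟨hK.continuous.strictMono_of_inj hinj,
    limit_div_ne_zero_of_antilipschitzWith IsOrderBornology.atTop_le_cobounded
      (hK'.to_rightInverse (Function.leftInverse_invFun hinj)) hL⟩

end LimitSlope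

section Rescaling

open MvPolynomial

variable {σ : Type*}

theorem coeff_aeval_C_mul_X {R : Type*} [CommSemiring R] (a : σ → R) (F : MvPolynomial σ R)
    (m : σ →₀ ℕ) :
    (aeval (fun i ↦ C (a i) * X i) F).coeff m = (m.prod fun i k ↦ a i ^ k) * F.coeff m := by
  classical
  induction F using induction_on' with
  | monomial n c =>
    have hmonomial : aeval (fun i ↦ C (a i) * X i) (monomial n c) =
        monomial n ((n.prod fun i k ↦ a i ^ k) * c) := by
      rw [aeval_monomial, monomial_eq (s := n), C_mul, algebraMap_eq, Finsupp.prod, Finsupp.prod,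
        Finsupp.prod, map_prod]
      simp only [mul_pow, Finset.prod_mul_distrib, C_pow]
      ring
    rw [hmonomial, coeff_monomial, coeff_monomial]
    split_ifs with h
    · rw [h]
    · rw [mul_zero]
  | add F G hF hG => rw [map_add, coeff_add, hF, hG, coeff_add, mul_add]

theorem rpow_weight {t : ℝ} (ht : 0 < t) (w : σ → ℝ) (m : σ →₀ ℕ) :
    t ^ Finsupp.weight w m = m.prod fun i k ↦ (t ^ w i) ^ k := by
  simp only [Finsupp.weight_apply, Finsupp.sum, Finsupp.prod, ← Real.rpow_mul_natCast ht.le,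
    nsmul_eq_mul, mul_comm, Real.rpow_sum_of_pos ht]

theorem isWeightedHomogeneous_of_eval_rpow_mul {w : σ → ℝ} {d t : ℝ} (ht : 0 < t) (ht1 : t ≠ 1)
    {F : MvPolynomial σ ℝ}
    (hF : ∀ z : σ → ℝ, eval (fun i ↦ t ^ w i * z i) F = t ^ d * eval z F) :
    IsWeightedHomogeneous w F d := by
  have hrescale : aeval (fun i ↦ C (t ^ w i) * X i) F = C (t ^ d) * F := by
    refine MvPolynomial.funext fun z ↦ ?_
    have hid : (eval z).comp C = RingHom.id ℝ := by ext; simp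
    rw [map_mul, eval_C, ← hF, aeval_def, algebraMap_eq, eval_eval₂, hid]
    simp only [map_mul, eval_C, eval_X]
    rfl
  intro m hm
  have hcoeff := congrArg (coeff m) hrescale
  rw [coeff_aeval_C_mul_X, ← rpow_weight ht, coeff_C_mul] at hcoeff
  exact (Real.rpow_right_inj ht ht1).1 (mul_right_cancel₀ hm hcoeff)

end Rescaling

theorem isWeightedHomogeneous_of_eval2_rpow_mul {β : ℝ} {d : ℕ} {F : MvPolynomial (Fin 2) ℝ}
    (hF : ∀ t x y : ℝ, 0 < t → eval2 F (t * x) (t ^ β * y) = t ^ d * eval2 F x y) :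
    MvPolynomial.IsWeightedHomogeneous ![1, β] F (d : ℝ) := by
  refine isWeightedHomogeneous_of_eval_rpow_mul two_pos (by norm_num) fun z ↦ ?_
  have hscaled : (fun i ↦ 2 ^ ![1, β] i * z i) = ![2 * z 0, 2 ^ β * z 1] := by
    ext i
    fin_cases i <;> simp
  have hz : ![z 0, z 1] = z := by
    ext i
    fin_cases i <;> rfl
  simpa [hscaled, eval2, hz] using hF 2 (z 0) (z 1) two_pos

section WeightedHomogeneous

open MvPolynomial

variable {R : Type*} [CommSemiring R] {F : MvPolynomial (Fin 2) R} {β d : ℝ}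

theorem add_mul_eq_of_mem_support (hF : IsWeightedHomogeneous ![1, β] F d) {m : Fin 2 →₀ ℕ}
    (hm : m ∈ F.support) : m 0 + β * m 1 = d := by
  rw [← hF (mem_support_iff.1 hm)]
  simp [Finsupp.weight_apply, Finsupp.sum_fintype, mul_comm]

theorem eq_of_mem_support_of_apply_one_eq (hF : IsWeightedHomogeneous ![1, β] F d)
    {m n : Fin 2 →₀ ℕ} (hm : m ∈ F.support) (hn : n ∈ F.support) (h : m 1 = n 1) : m = n := by
  have hm_weight := add_mul_eq_of_mem_support hF hm
  rw [h, ← add_mul_eq_of_mem_support hF hn, add_left_inj, Nat.cast_inj] at hm_weight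
  ext i
  fin_cases i <;> assumption

theorem exists_mem_support_apply_eq_degreeOf {σ : Type*} {F : MvPolynomial σ R} (hF : F ≠ 0)
    (i : σ) : ∃ m ∈ F.support, m i = F.degreeOf i := by
  obtain ⟨m, hm, hsup⟩ := F.support.exists_mem_eq_sup (support_nonempty.2 hF) (· i)
  exact ⟨m, hm, by rw [degreeOf_eq_sup, hsup]⟩

theorem X_zero_dvd_iff_mul_degreeOf_one_ne (hβ : 0 ≤ β) (hF : IsWeightedHomogeneous ![1, β] F d)
    (hF0 : F ≠ 0) : X 0 ∣ F ↔ β * F.degreeOf 1 ≠ d := by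
  have hdvd : X 0 ∣ F ↔ ∀ m ∈ F.support, m 0 ≠ 0 := by
    simpa [Ideal.mem_span_singleton] using mem_ideal_span_X_image (x := F) (s := {0})
  obtain ⟨top, htop, htop_deg⟩ := exists_mem_support_apply_eq_degreeOf hF0 1
  have htop_weight := add_mul_eq_of_mem_support hF htop
  rw [htop_deg] at htop_weight
  rw [hdvd]
  refine ⟨fun h heq ↦ h top htop ?_, fun hne m hm hm0 ↦ hne (le_antisymm ?_ ?_)⟩
  · exact_mod_cast add_eq_right.1 (htop_weight.trans heq.symm)
  · exact htop_weight ▸ le_add_of_nonneg_left (Nat.cast_nonneg _)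
  · calc d = β * m 1 := by simpa [hm0] using (add_mul_eq_of_mem_support hF hm).symm
      _ ≤ β * F.degreeOf 1 := by gcongr; exact monomial_le_degreeOf 1 hm

theorem exists_eq_C_mul_X_pow_of_degreeOf_one_eq_zero {d : ℕ}
    (hF : IsWeightedHomogeneous ![1, β] F (d : ℝ)) (hdeg : F.degreeOf 1 = 0) :
    ∃ c, F = C c * X 0 ^ d := by
  refine ⟨F.coeff (Finsupp.single 0 d), ?_⟩
  rw [C_mul_X_pow_eq_monomial]
  refine eq_monomial_of_support_subset_singleton fun m hm ↦ ?_
  have hm1 : m 1 = 0 := Nat.le_zero.1 (hdeg ▸ monomial_le_degreeOf 1 hm)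
  have hm0 : m 0 = d := by simpa [hm1] using add_mul_eq_of_mem_support hF hm
  ext i
  fin_cases i <;> simp [hm0, hm1]

/-- The height function `t ↦ F(x, t)` of `F` as a univariate polynomial; the functions `f₊` and
`f₋` are the cases `x = 1` and `x = -1`. -/
noncomputable def heightPolynomial (F : MvPolynomial (Fin 2) R) (x : R) : Polynomial R :=
  aeval ![Polynomial.C x, Polynomial.X] F

theorem heightPolynomial_eq_sum (F : MvPolynomial (Fin 2) R) (x : R) :
    heightPolynomial F x =
      ∑ m ∈ F.support, Polynomial.C (F.coeff m * x ^ m 0) * Polynomial.X ^ m 1 := by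
  simp [heightPolynomial, aeval_def, eval₂_eq', mul_assoc]

theorem eval_heightPolynomial (F : MvPolynomial (Fin 2) R) (x t : R) :
    (heightPolynomial F x).eval t = eval ![x, t] F := by
  simp [heightPolynomial_eq_sum, Polynomial.eval_finsetSum, eval_eq', mul_assoc]

theorem natDegree_heightPolynomial_le (F : MvPolynomial (Fin 2) R) (x : R) :
    (heightPolynomial F x).natDegree ≤ F.degreeOf 1 := by
  rw [heightPolynomial_eq_sum]
  exact Polynomial.natDegree_sum_le_of_forall_le _ _ fun m hm ↦
    (Polynomial.natDegree_C_mul_X_pow_le _ _).trans (monomial_le_degreeOf 1 hm)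

theorem coeff_heightPolynomial_of_mem_support (hF : IsWeightedHomogeneous ![1, β] F d)
    {m : Fin 2 →₀ ℕ} (hm : m ∈ F.support) (x : R) :
    (heightPolynomial F x).coeff (m 1) = F.coeff m * x ^ m 0 := by
  simp only [heightPolynomial_eq_sum, Polynomial.finsetSum_coeff, Polynomial.coeff_C_mul_X_pow]
  rw [Finset.sum_eq_single_of_mem m hm fun n hn hnm ↦ if_neg fun h ↦
    hnm (eq_of_mem_support_of_apply_one_eq hF hn hm h.symm), if_pos rfl]

theorem natDegree_heightPolynomial [NoZeroDivisors R] (hF : IsWeightedHomogeneous ![1, β] F d)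
    {x : R} (hx : x ≠ 0) : (heightPolynomial F x).natDegree = F.degreeOf 1 := by
  rcases eq_or_ne F 0 with rfl | hF0
  · simp [heightPolynomial]
  obtain ⟨top, htop, htop_deg⟩ := exists_mem_support_apply_eq_degreeOf hF0 1
  refine Polynomial.natDegree_eq_of_le_of_coeff_ne_zero (natDegree_heightPolynomial_le F x) ?_
  rw [← htop_deg, coeff_heightPolynomial_of_mem_support hF htop]
  exact mul_ne_zero (mem_support_iff.1 htop) (pow_ne_zero _ hx)

theorem heightPolynomial_ne_zero [NoZeroDivisors R] (hF : IsWeightedHomogeneous ![1, β] F d)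
    (hF0 : F ≠ 0) {x : R} (hx : x ≠ 0) : heightPolynomial F x ≠ 0 := by
  obtain ⟨m, hm⟩ := support_nonempty.2 hF0
  refine fun h ↦ mul_ne_zero (mem_support_iff.1 hm) (pow_ne_zero (m 0) hx) ?_
  rw [← coeff_heightPolynomial_of_mem_support hF hm, h, Polynomial.coeff_zero]

theorem abs_leadingCoeff_heightPolynomial {R : Type*} [CommRing R] [LinearOrder R]
    [IsStrictOrderedRing R] {F : MvPolynomial (Fin 2) R} (hF : IsWeightedHomogeneous ![1, β] F d)
    {x : R} (hx : |x| = 1) :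
    |(heightPolynomial F x).leadingCoeff| = |(heightPolynomial F 1).leadingCoeff| := by
  rcases eq_or_ne F 0 with rfl | hF0
  · simp [heightPolynomial]
  have hx0 : x ≠ 0 := abs_pos.1 (hx ▸ one_pos)
  obtain ⟨top, htop, htop_deg⟩ := exists_mem_support_apply_eq_degreeOf hF0 1
  rw [Polynomial.leadingCoeff, Polynomial.leadingCoeff, natDegree_heightPolynomial hF hx0,
    natDegree_heightPolynomial hF one_ne_zero, ← htop_deg,
    coeff_heightPolynomial_of_mem_support hF htop, coeff_heightPolynomial_of_mem_support hF htop]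
  simp [abs_mul, abs_pow, hx]

end WeightedHomogeneous

theorem rpow_mul_eq_rpow_mul_iff {a b u v : ℝ} (ha : 0 < a) (hb : 0 < b) (hu : 0 ≤ u)
    (hv : 0 < v) {e : ℕ} (he : e ≠ 0) (β d : ℝ) (h : a ^ d * u ^ e = b ^ d * v ^ e) :
    a ^ β * u = b ^ β * v ↔ β * e = d ∨ a = b := by
  have hsplit {c w : ℝ} (hc : 0 < c) :
      c ^ d * w ^ e = c ^ (d - β * e) * (c ^ β * w) ^ e := by
    rw [mul_pow, ← Real.rpow_mul_natCast hc.le, ← mul_assoc, ← Real.rpow_add hc, sub_add_cancel]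
  rw [hsplit ha, hsplit hb] at h
  have hbv : (b ^ β * v) ^ e ≠ 0 := by positivity
  have hscale : a ^ β * u = b ^ β * v ↔ a ^ (d - β * e) = b ^ (d - β * e) := by
    rw [← pow_left_inj₀ (by positivity) (by positivity) he]
    constructor <;> intro heq
    · exact mul_right_cancel₀ hbv (heq ▸ h)
    · exact mul_left_cancel₀ (Real.rpow_pos_of_pos hb _).ne' (heq ▸ h)
  rw [hscale]
  rcases eq_or_ne (β * e) d with hd | hd
  · simp [hd]
  · simp [hd, Real.rpow_left_inj ha.le hb.le (sub_ne_zero.2 hd.symm)]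

theorem mul_eq_mul_iff_same_sign {a b u v : ℝ} (ha : 0 < a) (hb : 0 < b) (hu : u ≠ 0)
    (hv : v ≠ 0) :
    a * u = b * v ↔ ((0 < u ∧ 0 < v) ∨ (u < 0 ∧ v < 0)) ∧ a * |u| = b * |v| := by
  rcases hu.lt_or_gt with hu | hu <;> rcases hv.lt_or_gt with hv | hv
  · simp [hu, hv, abs_of_neg]
  · simp only [hu, hv, hu.not_gt, hv.not_gt, and_false, false_and, or_self, iff_false]
    exact ((mul_neg_of_pos_of_neg ha hu).trans (mul_pos hb hv)).ne
  · simp only [hu, hv, hu.not_gt, hv.not_gt, and_false, false_and, or_self, iff_false]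
    exact ((mul_neg_of_pos_of_neg hb hv).trans (mul_pos ha hu)).ne'
  · simp [hu, hv, abs_of_pos]

section Heights

open MvPolynomial

variable {F G : MvPolynomial (Fin 2) ℝ} {β d : ℝ}

theorem ne_zero_of_mul_eval2_comp_eq (hF : IsWeightedHomogeneous ![1, β] F d) (hF0 : F ≠ 0)
    {x y k : ℝ} (hx : x ≠ 0) {φ : ℝ → ℝ} (h : ∀ t, k * eval2 G y (φ t) = eval2 F x t) : G ≠ 0 := by
  rintro rfl
  refine heightPolynomial_ne_zero hF hF0 hx (Polynomial.funext fun t ↦ ?_)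
  simpa [eval_heightPolynomial, eval2] using (h t).symm

theorem degreeOf_one_eq_and_abs_leadingCoeff_eq (hF : IsWeightedHomogeneous ![1, β] F d)
    (hG : IsWeightedHomogeneous ![1, β] G d) (hG0 : G ≠ 0) {x y k L : ℝ} (hx : |x| = 1)
    (hy : |y| = 1) (hk : 0 < k) (hL : L ≠ 0) {φ : ℝ → ℝ}
    (hφ : Tendsto (fun t ↦ φ t / t) atTop (𝓝 L))
    (h : ∀ t, k * eval2 G y (φ t) = eval2 F x t) :
    F.degreeOf 1 = G.degreeOf 1 ∧ |(heightPolynomial F 1).leadingCoeff| =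
      k * |(heightPolynomial G 1).leadingCoeff| * |L| ^ G.degreeOf 1 := by
  have hx0 : x ≠ 0 := abs_pos.1 (hx ▸ one_pos)
  have hy0 : y ≠ 0 := abs_pos.1 (hy ▸ one_pos)
  have hheights (t : ℝ) :
      k * (heightPolynomial G y).eval (φ t) = (heightPolynomial F x).eval t := by
    simpa only [eval_heightPolynomial, eval2] using h t
  obtain ⟨hdeg, hlead⟩ := natDegree_eq_and_leadingCoeff_eq_of_mul_eval_comp
    IsOrderBornology.atTop_le_cobounded (heightPolynomial_ne_zero hG hG0 hy0) hk.ne' hL hφ hheights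
  rw [natDegree_heightPolynomial hG hy0] at hdeg hlead
  rw [natDegree_heightPolynomial hF hx0] at hdeg
  refine ⟨hdeg, ?_⟩
  rw [← abs_leadingCoeff_heightPolynomial hF hx, hlead, abs_mul, abs_mul, abs_of_pos hk, abs_pow,
    abs_leadingCoeff_heightPolynomial hG hy]

theorem rpow_mul_abs_limit_eq_iff_not_X_dvd_or_eq {d : ℕ} (hβ : 0 ≤ β)
    (hF : IsWeightedHomogeneous ![1, β] F (d : ℝ))
    (hG : IsWeightedHomogeneous ![1, β] G (d : ℝ)) (hFX : ∀ c : ℝ, F ≠ C c * X 0 ^ d)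
    {x₁ y₁ x₂ y₂ : ℝ} (hx₁ : |x₁| = 1) (hy₁ : |y₁| = 1) (hx₂ : |x₂| = 1) (hy₂ : |y₂| = 1)
    {a₁ a₂ L₁ L₂ : ℝ} (ha₁ : 0 < a₁) (ha₂ : 0 < a₂) (hL₁ : L₁ ≠ 0) (hL₂ : L₂ ≠ 0) {φ₁ φ₂ : ℝ → ℝ}
    (hφ₁ : Tendsto (fun t ↦ φ₁ t / t) atTop (𝓝 L₁))
    (hφ₂ : Tendsto (fun t ↦ φ₂ t / t) atTop (𝓝 L₂))
    (h₁ : ∀ t, a₁ ^ d * eval2 G y₁ (φ₁ t) = eval2 F x₁ t)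
    (h₂ : ∀ t, a₂ ^ d * eval2 G y₂ (φ₂ t) = eval2 F x₂ t) :
    a₁ ^ β * |L₁| = a₂ ^ β * |L₂| ↔ (¬ X 0 ∣ F ∧ ¬ X 0 ∣ G) ∨ a₁ = a₂ := by
  have hF0 : F ≠ 0 := by simpa using hFX 0
  have hG0 : G ≠ 0 := ne_zero_of_mul_eval2_comp_eq hF hF0 (abs_pos.1 (hx₁ ▸ one_pos)) h₁
  obtain ⟨hdeg, hlead₁⟩ :=
    degreeOf_one_eq_and_abs_leadingCoeff_eq hF hG hG0 hx₁ hy₁ (pow_pos ha₁ d) hL₁ hφ₁ h₁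
  obtain ⟨-, hlead₂⟩ :=
    degreeOf_one_eq_and_abs_leadingCoeff_eq hF hG hG0 hx₂ hy₂ (pow_pos ha₂ d) hL₂ hφ₂ h₂
  have hF_deg : F.degreeOf 1 ≠ 0 := fun h ↦
    (exists_eq_C_mul_X_pow_of_degreeOf_one_eq_zero hF h).elim hFX
  have hG_lead : |(heightPolynomial G 1).leadingCoeff| ≠ 0 := by
    simpa using heightPolynomial_ne_zero hG hG0 one_ne_zero
  have hlimits : a₁ ^ (d : ℝ) * |L₁| ^ F.degreeOf 1 = a₂ ^ (d : ℝ) * |L₂| ^ F.degreeOf 1 := by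
    rw [Real.rpow_natCast, Real.rpow_natCast, hdeg]
    refine mul_left_cancel₀ hG_lead ?_
    linear_combination hlead₂ - hlead₁
  rw [rpow_mul_eq_rpow_mul_iff ha₁ ha₂ (abs_nonneg L₁) (abs_pos.2 hL₂) hF_deg β d hlimits,
    X_zero_dvd_iff_mul_degreeOf_one_ne hβ hF hF0, X_zero_dvd_iff_mul_degreeOf_one_ne hβ hG hG0,
    ← hdeg, not_not, and_self]

end Heights

theorem stmt_17_general (d : ℕ) {β : ℝ} (hβ : 0 ≤ β) {F G : MvPolynomial (Fin 2) ℝ}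
    (hF : ∀ t x y : ℝ, 0 < t → eval2 F (t * x) (t ^ β * y) = t ^ d * eval2 F x y)
    (hG : ∀ t x y : ℝ, 0 < t → eval2 G (t * x) (t ^ β * y) = t ^ d * eval2 G x y)
    (hFX : ∀ c : ℝ, F ≠ MvPolynomial.C c * (MvPolynomial.X 0 : MvPolynomial (Fin 2) ℝ) ^ d)
    {l1 l2 : ℝ} (hll : 0 < l1 * l2) {φ1 φ2 : ℝ → ℝ}
    (hφ1 : StrictMono φ1 ∨ StrictAnti φ1) (hφ2 : StrictMono φ2 ∨ StrictAnti φ2)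
    (hpos : 0 < l1 → 0 < l2 →
      (∀ t : ℝ, |l1| ^ d * eval2 G 1 (φ1 t) = eval2 F 1 t) ∧
      (∀ t : ℝ, |l2| ^ d * eval2 G (-1) (φ2 t) = eval2 F (-1) t))
    (hneg : l1 < 0 → l2 < 0 →
      (∀ t : ℝ, |l1| ^ d * eval2 G (-1) (φ1 t) = eval2 F 1 t) ∧
      (∀ t : ℝ, |l2| ^ d * eval2 G 1 (φ2 t) = eval2 F (-1) t))
    {L1 L2 : ℝ} (hL1 : L1 ≠ 0) (hL2 : L2 ≠ 0)
    (hL1top : Tendsto (fun t => φ1 t / t) atTop (𝓝 L1))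
    (hL2top : Tendsto (fun t => φ2 t / t) atTop (𝓝 L2)) :
    |l1| ^ β * L1 = |l2| ^ β * L2 ↔
      ((StrictMono φ1 ∧ StrictMono φ2) ∨ (StrictAnti φ1 ∧ StrictAnti φ2)) ∧
      ((¬ (MvPolynomial.X 0 : MvPolynomial (Fin 2) ℝ) ∣ F ∧
        ¬ (MvPolynomial.X 0 : MvPolynomial (Fin 2) ℝ) ∣ G) ∨ l1 = l2) := by
  have hl1 : 0 < |l1| := abs_pos.2 (left_ne_zero_of_mul hll.ne')
  have hl2 : 0 < |l2| := abs_pos.2 (right_ne_zero_of_mul hll.ne')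
  have hFw := isWeightedHomogeneous_of_eval2_rpow_mul hF
  have hGw := isWeightedHomogeneous_of_eval2_rpow_mul hG
  rw [mul_eq_mul_iff_same_sign (Real.rpow_pos_of_pos hl1 β) (Real.rpow_pos_of_pos hl2 β) hL1 hL2,
    strictMono_iff_limit_div_pos hφ1 hL1 hL1top, strictMono_iff_limit_div_pos hφ2 hL2 hL2top,
    strictAnti_iff_limit_div_neg hφ1 hL1 hL1top, strictAnti_iff_limit_div_neg hφ2 hL2 hL2top]
  refine and_congr_right fun _ ↦ ?_
  rcases pos_and_pos_or_neg_and_neg_of_mul_pos hll with ⟨h1, h2⟩ | ⟨h1, h2⟩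
  · obtain ⟨heights1, heights2⟩ := hpos h1 h2
    rw [rpow_mul_abs_limit_eq_iff_not_X_dvd_or_eq hβ hFw hGw hFX (by simp) (by simp) (by simp)
      (by simp) hl1 hl2 hL1 hL2 hL1top hL2top heights1 heights2,
      abs_of_pos h1, abs_of_pos h2]
  · obtain ⟨heights1, heights2⟩ := hneg h1 h2
    rw [rpow_mul_abs_limit_eq_iff_not_X_dvd_or_eq hβ hFw hGw hFX (by simp) (by simp) (by simp)
      (by simp) hl1 hl2 hL1 hL2 hL1top hL2top heights1 heights2,
      abs_of_neg h1, abs_of_neg h2, neg_inj]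

/-- Characterization of β-transitions: given β-quasihomogeneous polynomials `F, G` of
degree `d ≥ 1`, neither a scalar multiple of `X^d`, whose height functions are related
by a proto-transition `(λ, φ)` with limits `φᵢ(t)/t → Lᵢ`, the identity
`|λ₁|^β·L₁ = |λ₂|^β·L₂` holds iff (i) `φ₁, φ₂` are coherent and (ii) `X` divides
neither `F` nor `G`, or `λ₁ = λ₂`. -/
theorem stmt_17 (r s d : ℕ) (hrs : s < r) (hs : 0 < s) (hgcd : Nat.gcd r s = 1)
    (hd : 1 ≤ d) (β : ℝ) (hβ : β = (r : ℝ) / (s : ℝ))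
    (F G : MvPolynomial (Fin 2) ℝ)
    (hF : ∀ t x y : ℝ, 0 < t → eval2 F (t * x) (t ^ β * y) = t ^ d * eval2 F x y)
    (hG : ∀ t x y : ℝ, 0 < t → eval2 G (t * x) (t ^ β * y) = t ^ d * eval2 G x y)
    (hFX : ∀ c : ℝ, F ≠ MvPolynomial.C c * (MvPolynomial.X 0 : MvPolynomial (Fin 2) ℝ) ^ d)
    (hGX : ∀ c : ℝ, G ≠ MvPolynomial.C c * (MvPolynomial.X 0 : MvPolynomial (Fin 2) ℝ) ^ d)
    (l1 l2 : ℝ) (hl1 : l1 ≠ 0) (hl2 : l2 ≠ 0) (hll : 0 < l1 * l2)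
    (φ1 φ2 : ℝ → ℝ)
    (hφ1bij : Function.Bijective φ1) (hφ1lip : ∃ K : NNReal, LipschitzWith K φ1)
    (hφ1inv : ∃ K : NNReal, LipschitzWith K (Function.invFun φ1))
    (hφ2bij : Function.Bijective φ2) (hφ2lip : ∃ K : NNReal, LipschitzWith K φ2)
    (hφ2inv : ∃ K : NNReal, LipschitzWith K (Function.invFun φ2))
    (hpos : 0 < l1 → 0 < l2 →
      (∀ t : ℝ, |l1| ^ d * eval2 G 1 (φ1 t) = eval2 F 1 t) ∧
      (∀ t : ℝ, |l2| ^ d * eval2 G (-1) (φ2 t) = eval2 F (-1) t))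
    (hneg : l1 < 0 → l2 < 0 →
      (∀ t : ℝ, |l1| ^ d * eval2 G (-1) (φ1 t) = eval2 F 1 t) ∧
      (∀ t : ℝ, |l2| ^ d * eval2 G 1 (φ2 t) = eval2 F (-1) t))
    (L1 L2 : ℝ)
    (hL1top : Tendsto (fun t => φ1 t / t) atTop (𝓝 L1))
    (hL1bot : Tendsto (fun t => φ1 t / t) atBot (𝓝 L1))
    (hL2top : Tendsto (fun t => φ2 t / t) atTop (𝓝 L2))
    (hL2bot : Tendsto (fun t => φ2 t / t) atBot (𝓝 L2)) :
    |l1| ^ β * L1 = |l2| ^ β * L2 ↔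
      ((StrictMono φ1 ∧ StrictMono φ2) ∨ (StrictAnti φ1 ∧ StrictAnti φ2)) ∧
      ((¬ (MvPolynomial.X 0 : MvPolynomial (Fin 2) ℝ) ∣ F ∧
        ¬ (MvPolynomial.X 0 : MvPolynomial (Fin 2) ℝ) ∣ G) ∨ l1 = l2) := by
  obtain ⟨hφ1, hL1⟩ :=
    strictMono_or_strictAnti_and_limit_div_ne_zero hφ1bij.injective hφ1lip hφ1inv hL1top
  obtain ⟨hφ2, hL2⟩ :=
    strictMono_or_strictAnti_and_limit_div_ne_zero hφ2bij.injective hφ2lip hφ2inv hL2top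
  exact stmt_17_general d (hβ ▸ by positivity) hF hG hFX hll hφ1 hφ2 hpos hneg hL1
    hL2 hL1top hL2top
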